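/- For every term t of the calculus λ_S, either t is a normal form, or there exist a unique redex r and a unique evaluation context F such that t = F[r]. Consequently the reduction relation →_v is deterministic. -/

import Mathlib

namespace LambdaS

/-- Terms of the calculus λ_S: variables, λ-abstractions, applications,
the shift operator `S k.t`, and the reset delimiter `⟨t⟩`. -/
inductive Tm : Type
  | var : ℕ → Tm
  | lam : ℕ → Tm → Tm
  | app : Tm → Tm → Tm
  | shift : ℕ → Tm → Tm
  | reset : Tm → Tm
  deriving DecidableEq

/-- A variable fresh for a finite set of variables. -/
def fresh (s : Finset ℕ) : ℕ := if h : s.Nonempty then s.max' h + 1 else 0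

namespace Tm

/-- Free variables. -/
def fv : Tm → Finset ℕ
  | var x => {x}
  | lam x t => fv t \ {x}
  | app t u => fv t ∪ fv u
  | shift k t => fv t \ {k}
  | reset t => fv t

def size : Tm → ℕ
  | var _ => 1
  | lam _ t => size t + 1
  | app t u => size t + size u + 1
  | shift _ t => size t + 1
  | reset t => size t + 1

/-- Renaming of free occurrences of a variable (used for α-renaming with a
fresh target variable). -/
def rename : Tm → ℕ → ℕ → Tm
  | var w, y, z => if w = y then var z else var w
  | lam w t, y, z => if w = y then lam w t else lam w (rename t y z)
  | app t u, y, z => app (rename t y z) (rename u y z)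
  | shift w t, y, z => if w = y then shift w t else shift w (rename t y z)
  | reset t, y, z => reset (rename t y z)

theorem size_rename (t : Tm) (y z : ℕ) : size (rename t y z) = size t := by
  induction t generalizing y z with
  | var w => simp only [rename]; split <;> rfl
  | lam w t ih => simp only [rename]; split <;> simp [size, ih]
  | app t u iht ihu => simp [rename, size, iht, ihu]
  | shift w t ih => simp only [rename]; split <;> simp [size, ih]
  | reset t ih => simp [rename, size, ih]

/-- Capture-avoiding substitution `t{v/x}` of `v` for the free occurrences of
`x` in `t`; bound variables are α-renamed when needed. -/
def subst : Tm → ℕ → Tm → Tm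
  | var w, x, v => if w = x then v else var w
  | lam y t, x, v =>
      if y = x then lam y t
      else if y ∈ fv v then
        lam (fresh (fv v ∪ fv t ∪ {x}))
          (subst (rename t y (fresh (fv v ∪ fv t ∪ {x}))) x v)
      else lam y (subst t x v)
  | app t u, x, v => app (subst t x v) (subst u x v)
  | shift y t, x, v =>
      if y = x then shift y t
      else if y ∈ fv v then
        shift (fresh (fv v ∪ fv t ∪ {x}))
          (subst (rename t y (fresh (fv v ∪ fv t ∪ {x}))) x v)
      else shift y (subst t x v)
  | reset t, x, v => reset (subst t x v)
termination_by t _ _ => size t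
decreasing_by all_goals simp [size_rename, size] <;> omega

end Tm

/-- Values: variables and λ-abstractions. -/
inductive IsValue : Tm → Prop
  | var (x : ℕ) : IsValue (Tm.var x)
  | lam (x : ℕ) (t : Tm) : IsValue (Tm.lam x t)

/-- A term is closed if it has no free variables. -/
def Closed (t : Tm) : Prop := t.fv = ∅

/-- Pure evaluation contexts E ::= □ | v E | E t. -/
inductive ECtx : Type
  | hole : ECtx
  | appR : (v : Tm) → IsValue v → ECtx → ECtx
  | appL : ECtx → Tm → ECtx

def ECtx.plug : ECtx → Tm → Tm
  | .hole, t => t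
  | .appR v _ E, t => Tm.app v (E.plug t)
  | .appL E u, t => Tm.app (E.plug t) u

def ECtx.fv : ECtx → Finset ℕ
  | .hole => ∅
  | .appR v _ E => v.fv ∪ E.fv
  | .appL E u => E.fv ∪ u.fv

/-- Composition of pure contexts: `(E.comp E').plug t = E.plug (E'.plug t)`. -/
def ECtx.comp : ECtx → ECtx → ECtx
  | .hole, E' => E'
  | .appR v hv E, E' => .appR v hv (E.comp E')
  | .appL E u, E' => .appL (E.comp E') u

/-- Evaluation contexts F ::= □ | v F | F t | ⟨F⟩. -/
inductive FCtx : Type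
  | hole : FCtx
  | appR : (v : Tm) → IsValue v → FCtx → FCtx
  | appL : FCtx → Tm → FCtx
  | reset : FCtx → FCtx

def FCtx.plug : FCtx → Tm → Tm
  | .hole, t => t
  | .appR v _ F, t => Tm.app v (F.plug t)
  | .appL F u, t => Tm.app (F.plug t) u
  | .reset F, t => Tm.reset (F.plug t)

def FCtx.fv : FCtx → Finset ℕ
  | .hole => ∅
  | .appR v _ F => v.fv ∪ F.fv
  | .appL F u => F.fv ∪ u.fv
  | .reset F => F.fv

/-- The function `λx.⟨E[x]⟩` representing the captured delimited context `E`,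
where `x` is chosen fresh (in particular `x ∉ fv E`). -/
def contFun (E : ECtx) : Tm :=
  Tm.lam (fresh E.fv) (Tm.reset (E.plug (Tm.var (fresh E.fv))))

/-- Call-by-value reduction →_v of λ_S. -/
inductive Red : Tm → Tm → Prop
  | beta (F : FCtx) (x : ℕ) (t v : Tm) :
      IsValue v →
      Red (F.plug (Tm.app (Tm.lam x t) v)) (F.plug (t.subst x v))
  | capture (F : FCtx) (E : ECtx) (k : ℕ) (t : Tm) :
      Red (F.plug (Tm.reset (E.plug (Tm.shift k t))))
          (F.plug (Tm.reset (t.subst k (contFun E))))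
  | resetVal (F : FCtx) (v : Tm) :
      IsValue v →
      Red (F.plug (Tm.reset v)) (F.plug v)

/-- A stuck term: not a value and unable to reduce. -/
def Stuck (t : Tm) : Prop := ¬ IsValue t ∧ ∀ t', ¬ Red t t'

/-- Normal forms: values and stuck terms. -/
def NormalForm (t : Tm) : Prop := IsValue t ∨ Stuck t

/-- A control-stuck term has the form E[S k.t]. -/
def ControlStuck (t : Tm) : Prop :=
  ∃ (E : ECtx) (k : ℕ) (s : Tm), t = E.plug (Tm.shift k s)

/-- Evaluation: `t ⇓ t'` iff `t →_v* t'` and `t'` is a normal form. -/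
def Evals (t t' : Tm) : Prop := Relation.ReflTransGen Red t t' ∧ NormalForm t'

/-- `t` evaluates to some value. -/
def EvalsToValue (t : Tm) : Prop := ∃ v, Relation.ReflTransGen Red t v ∧ IsValue v

/-- `t` evaluates to some control-stuck term. -/
def EvalsToStuck (t : Tm) : Prop :=
  ∃ s, Relation.ReflTransGen Red t s ∧ ControlStuck s

/-- General contexts C ::= □ | λx.C | t C | C t | S k.C | ⟨C⟩. -/
inductive Ctx : Type
  | hole : Ctx
  | lam : ℕ → Ctx → Ctx
  | appL : Ctx → Tm → Ctx
  | appR : Tm → Ctx → Ctx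
  | shift : ℕ → Ctx → Ctx
  | reset : Ctx → Ctx

def Ctx.plug : Ctx → Tm → Tm
  | .hole, t => t
  | .lam x C, t => Tm.lam x (C.plug t)
  | .appL C u, t => Tm.app (C.plug t) u
  | .appR u C, t => Tm.app u (C.plug t)
  | .shift k C, t => Tm.shift k (C.plug t)
  | .reset C, t => Tm.reset (C.plug t)

def Ctx.fv : Ctx → Finset ℕ
  | .hole => ∅
  | .lam x C => C.fv \ {x}
  | .appL C u => C.fv ∪ u.fv
  | .appR u C => u.fv ∪ C.fv
  | .shift k C => C.fv \ {k}
  | .reset C => C.fv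

/-- Contextual equivalence ≈ for the relaxed semantics (on closed terms):
tests evaluation to values and evaluation to control-stuck terms in every
closed context. -/
def CtxEquiv (t0 t1 : Tm) : Prop :=
  ∀ C : Ctx, C.fv = ∅ →
    (EvalsToValue (C.plug t0) ↔ EvalsToValue (C.plug t1)) ∧
    (EvalsToStuck (C.plug t0) ↔ EvalsToStuck (C.plug t1))

/-- Contextual equivalence ≈_p for the original semantics: tests evaluation to
values of ⟨C[·]⟩ in every closed context C. -/
def CtxEquivP (t0 t1 : Tm) : Prop :=
  ∀ C : Ctx, C.fv = ∅ →
    (EvalsToValue (Tm.reset (C.plug t0)) ↔ EvalsToValue (Tm.reset (C.plug t1)))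

/-- Contextual equivalence ≈_E testing only with closed evaluation contexts. -/
def ECtxEquiv (t0 t1 : Tm) : Prop :=
  ∀ F : FCtx, F.fv = ∅ →
    (EvalsToValue (F.plug t0) ↔ EvalsToValue (F.plug t1)) ∧
    (EvalsToStuck (F.plug t0) ↔ EvalsToStuck (F.plug t1))

/-- Applicative simulation. -/
def IsAppSim (R : Tm → Tm → Prop) : Prop :=
  ∀ t0 t1, R t0 t1 →
    (∀ t0', Red t0 t0' →
      ∃ t1', Relation.ReflTransGen Red t1 t1' ∧ R t0' t1') ∧
    (∀ x t0', t0 = Tm.lam x t0' →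
      ∃ t1', Relation.ReflTransGen Red t1 (Tm.lam x t1') ∧
        ∀ v, IsValue v → Closed v → R (t0'.subst x v) (t1'.subst x v)) ∧
    (∀ (E0 : ECtx) (k : ℕ) (t0' : Tm), t0 = E0.plug (Tm.shift k t0') →
      ∃ (E1 : ECtx) (t1' : Tm),
        Relation.ReflTransGen Red t1 (E1.plug (Tm.shift k t1')) ∧
        ∀ E : ECtx, E.fv = ∅ →
          R (Tm.reset (t0'.subst k (contFun (E.comp E0))))
            (Tm.reset (t1'.subst k (contFun (E.comp E1)))))

/-- Applicative bisimulation. -/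
def IsAppBisim (R : Tm → Tm → Prop) : Prop :=
  IsAppSim R ∧ IsAppSim (fun a b => R b a)

/-- Applicative bisimilarity ≈_app: the largest applicative bisimulation. -/
def AppBisim (t0 t1 : Tm) : Prop := ∃ R, IsAppBisim R ∧ R t0 t1

/-- Simultaneous substitution (used only with closing substitutions mapping
variables to closed values, so no capture can occur). -/
def Tm.msubst : Tm → (ℕ → Tm) → Tm
  | .var x, σ => σ x
  | .lam x t, σ => Tm.lam x (t.msubst (Function.update σ x (Tm.var x)))
  | .app t u, σ => Tm.app (t.msubst σ) (u.msubst σ)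
  | .shift k t, σ => Tm.shift k (t.msubst (Function.update σ k (Tm.var k)))
  | .reset t, σ => Tm.reset (t.msubst σ)

/-- Open extension of a relation on closed terms: relate `t0σ` and `t1σ` for
every substitution σ mapping variables to closed values. -/
def OpenExt (R : Tm → Tm → Prop) (t0 t1 : Tm) : Prop :=
  ∀ σ : ℕ → Tm, (∀ x, IsValue (σ x) ∧ Closed (σ x)) →
    R (t0.msubst σ) (t1.msubst σ)

/-- ω := λx.x x. -/
def omegaTm : Tm := Tm.lam 0 (Tm.app (Tm.var 0) (Tm.var 0))

/-- Ω := ω ω, a diverging term. -/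
def OmegaTm : Tm := Tm.app omegaTm omegaTm


/-- Redexes: `(λx.t) v`, `⟨E[S k.t]⟩`, and `⟨v⟩`. -/
def IsRedex (r : Tm) : Prop :=
  (∃ (x : ℕ) (t v : Tm), IsValue v ∧ r = Tm.app (Tm.lam x t) v) ∨
  (∃ (E : ECtx) (k : ℕ) (t : Tm), r = Tm.reset (E.plug (Tm.shift k t))) ∨
  (∃ v : Tm, IsValue v ∧ r = Tm.reset v)

/-! Call a term `v w`, `S k.t` or `⟨v⟩`, with `v` and `w` values, active. The immediate subterms of
an active term in evaluation position are values, so an active term is plugged into a term at only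
one position `F`. A redex is located through its active subterm: `(λx.t) v` and `⟨v⟩` are active
themselves, while `F[⟨E[S k.t]⟩]` has the active term `S k.t` in the context `F[⟨E⟩]`, from which
`F` and `E` are recovered by splitting at the innermost delimiter, `E` being pure. -/

/-- Active terms, the places where evaluation cannot descend any further: an application of a value
to a value, a shift, or a delimited value. The function part of an application may be a variable, so
an active term need not be a redex. -/
inductive IsActive : Tm → Prop
  | app {v w : Tm} : IsValue v → IsValue w → IsActive (Tm.app v w)
  | shift (k : ℕ) (t : Tm) : IsActive (Tm.shift k t)
  | reset {v : Tm} : IsValue v → IsActive (Tm.reset v)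

theorem IsActive.not_isValue_plug {a : Tm} (ha : IsActive a) (F : FCtx) :
    ¬ IsValue (F.plug a) := by
  intro hv
  cases F with
  | hole => cases ha <;> cases hv
  | _ => cases hv

theorem IsActive.eq_hole_of_plug_eq {a a' : Tm} (ha : IsActive a) (ha' : IsActive a') {F : FCtx}
    (h : F.plug a = a') : F = .hole := by
  subst h
  cases F with
  | hole => rfl
  | appR v hv F => cases ha' with | app _ hw => exact absurd hw (ha.not_isValue_plug F)
  | appL F u => cases ha' with | app hv _ => exact absurd hv (ha.not_isValue_plug F)
  | reset F => cases ha' with | reset hv => exact absurd hv (ha.not_isValue_plug F)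

theorem IsActive.plug_inj {a a' : Tm} (ha : IsActive a) (ha' : IsActive a') {F F' : FCtx}
    (h : F.plug a = F'.plug a') : F = F' ∧ a = a' := by
  induction F generalizing F' with
  | hole =>
    obtain rfl : F' = .hole := ha'.eq_hole_of_plug_eq ha h.symm
    exact ⟨rfl, h⟩
  | appR v hv F ih =>
    cases F' with
    | hole => nomatch ha.eq_hole_of_plug_eq ha' h
    | appR v' hv' F' =>
      obtain ⟨rfl, hplug⟩ := Tm.app.inj h
      obtain ⟨rfl, rfl⟩ := ih hplug
      exact ⟨rfl, rfl⟩
    | appL F' u' => exact absurd ((Tm.app.inj h).1 ▸ hv) (ha'.not_isValue_plug F')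
    | reset F' => cases h
  | appL F u ih =>
    cases F' with
    | hole => nomatch ha.eq_hole_of_plug_eq ha' h
    | appR v' hv' F' => exact absurd ((Tm.app.inj h).1 ▸ hv') (ha.not_isValue_plug F)
    | appL F' u' =>
      obtain ⟨hplug, rfl⟩ := Tm.app.inj h
      obtain ⟨rfl, rfl⟩ := ih hplug
      exact ⟨rfl, rfl⟩
    | reset F' => cases h
  | reset F ih =>
    cases F' with
    | hole => nomatch ha.eq_hole_of_plug_eq ha' h
    | reset F' =>
      obtain ⟨rfl, rfl⟩ := ih (Tm.reset.inj h)
      exact ⟨rfl, rfl⟩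
    | _ => cases h

/-- The inclusion of pure evaluation contexts into evaluation contexts. -/
def ECtx.toFCtx : ECtx → FCtx
  | .hole => .hole
  | .appR v hv E => .appR v hv E.toFCtx
  | .appL E u => .appL E.toFCtx u

/-- Composition of evaluation contexts, the analogue of `ECtx.comp`: `F.comp G` is `F[G]`. -/
def FCtx.comp : FCtx → FCtx → FCtx
  | .hole, G => G
  | .appR v hv F, G => .appR v hv (F.comp G)
  | .appL F u, G => .appL (F.comp G) u
  | .reset F, G => .reset (F.comp G)

theorem ECtx.plug_toFCtx (E : ECtx) (t : Tm) : E.toFCtx.plug t = E.plug t := by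
  induction E <;> simp_all [toFCtx, plug, FCtx.plug]

theorem FCtx.plug_comp (F G : FCtx) (t : Tm) : (F.comp G).plug t = F.plug (G.plug t) := by
  induction F <;> simp_all [comp, plug]

theorem ECtx.toFCtx_injective : Function.Injective toFCtx := by
  intro E E' h
  induction E generalizing E' <;> cases E' <;> grind [toFCtx]

theorem ECtx.toFCtx_ne_comp_reset (E : ECtx) (F G : FCtx) :
    E.toFCtx ≠ F.comp (.reset G) := by
  induction E generalizing F <;> cases F <;> simp_all [toFCtx, FCtx.comp]

theorem FCtx.comp_reset_toFCtx_inj {F F' : FCtx} {E E' : ECtx}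
    (h : F.comp (.reset E.toFCtx) = F'.comp (.reset E'.toFCtx)) : F = F' ∧ E = E' := by
  induction F generalizing F' <;> cases F' <;>
    grind [comp, ECtx.toFCtx_injective.eq_iff, ECtx.toFCtx_ne_comp_reset]

theorem FCtx.plug_reset_plug (F : FCtx) (E : ECtx) (t : Tm) :
    F.plug (Tm.reset (E.plug t)) = (F.comp (.reset E.toFCtx)).plug t := by
  rw [plug_comp, plug, E.plug_toFCtx]

theorem ECtx.plug_shift_inj {E E' : ECtx} {k k' : ℕ} {t t' : Tm}
    (h : E.plug (Tm.shift k t) = E'.plug (Tm.shift k' t')) : E = E' ∧ k = k' ∧ t = t' := by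
  rw [← plug_toFCtx, ← plug_toFCtx] at h
  obtain ⟨hE, hshift⟩ := (IsActive.shift k t).plug_inj (.shift k' t') h
  exact ⟨toFCtx_injective hE, Tm.shift.inj hshift⟩

theorem ECtx.not_isValue_plug_shift (E : ECtx) (k : ℕ) (t : Tm) :
    ¬ IsValue (E.plug (Tm.shift k t)) :=
  E.plug_toFCtx _ ▸ (IsActive.shift k t).not_isValue_plug E.toFCtx

theorem IsRedex.isActive_or_capture {r : Tm} (hr : IsRedex r) :
    (IsActive r ∧ ∀ k t, r ≠ Tm.shift k t) ∨
      ∃ (E : ECtx) (k : ℕ) (t : Tm), r = Tm.reset (E.plug (Tm.shift k t)) := by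
  rcases hr with ⟨x, t, v, hv, rfl⟩ | hcapture | ⟨v, hv, rfl⟩
  · exact .inl ⟨.app (.lam x t) hv, nofun⟩
  · exact .inr hcapture
  · exact .inl ⟨.reset hv, nofun⟩

theorem IsRedex.plug_inj {r r' : Tm} (hr : IsRedex r) (hr' : IsRedex r') {F F' : FCtx}
    (h : F.plug r = F'.plug r') : F = F' ∧ r = r' := by
  rcases hr.isActive_or_capture with ⟨ha, hne⟩ | ⟨E, k, t, rfl⟩ <;>
    rcases hr'.isActive_or_capture with ⟨ha', hne'⟩ | ⟨E', k', t', rfl⟩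
  · exact ha.plug_inj ha' h
  · rw [F'.plug_reset_plug] at h
    exact absurd (ha.plug_inj (.shift k' t') h).2 (hne k' t')
  · rw [F.plug_reset_plug] at h
    exact absurd (ha'.plug_inj (.shift k t) h.symm).2 (hne' k t)
  · rw [F.plug_reset_plug, F'.plug_reset_plug] at h
    obtain ⟨hctx, hshift⟩ := (IsActive.shift k t).plug_inj (.shift k' t') h
    obtain ⟨rfl, rfl⟩ := FCtx.comp_reset_toFCtx_inj hctx
    exact ⟨rfl, by rw [hshift]⟩

/-- Contraction of a redex: the rules of `Red` without the surrounding evaluation context. -/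
inductive Contract : Tm → Tm → Prop
  | beta (x : ℕ) (t : Tm) {v : Tm} :
      IsValue v → Contract (Tm.app (Tm.lam x t) v) (t.subst x v)
  | capture (E : ECtx) (k : ℕ) (t : Tm) :
      Contract (Tm.reset (E.plug (Tm.shift k t))) (Tm.reset (t.subst k (contFun E)))
  | resetVal {v : Tm} : IsValue v → Contract (Tm.reset v) v

theorem Contract.isRedex {r s : Tm} (h : Contract r s) : IsRedex r := by
  cases h with
  | beta x t hv => exact .inl ⟨x, t, _, hv, rfl⟩
  | capture E k t => exact .inr (.inl ⟨E, k, t, rfl⟩)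
  | resetVal hv => exact .inr (.inr ⟨_, hv, rfl⟩)

theorem Contract.deterministic {r s s' : Tm} (h : Contract r s) (h' : Contract r s') :
    s = s' := by
  generalize hr : r = r' at h'
  cases h with
  | beta x t hv => cases h' <;> cases hr; rfl
  | capture E k t =>
    cases h' with
    | beta => cases hr
    | capture E' k' t' =>
      obtain ⟨rfl, rfl, rfl⟩ := ECtx.plug_shift_inj (Tm.reset.inj hr)
      rfl
    | resetVal hv' => exact absurd (Tm.reset.inj hr ▸ hv') (E.not_isValue_plug_shift k t)
  | resetVal hv =>
    cases h' with
    | beta => cases hr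
    | capture E' k' t' =>
      exact absurd (Tm.reset.inj hr ▸ hv) (E'.not_isValue_plug_shift k' t')
    | resetVal => exact Tm.reset.inj hr

theorem Red.exists_contract {t t' : Tm} (h : Red t t') :
    ∃ (F : FCtx) (r s : Tm), Contract r s ∧ t = F.plug r ∧ t' = F.plug s := by
  cases h with
  | beta F x t v hv => exact ⟨F, _, _, .beta x t hv, rfl, rfl⟩
  | capture F E k t => exact ⟨F, _, _, .capture E k t, rfl, rfl⟩
  | resetVal F v hv => exact ⟨F, _, _, .resetVal hv, rfl, rfl⟩

theorem exists_red_of_not_normalForm {t : Tm} (h : ¬ NormalForm t) : ∃ t', Red t t' := by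
  by_contra! hred
  exact h (or_iff_not_imp_left.2 fun hv => ⟨hv, hred⟩)

/-- Unique decomposition: every term is a normal form or decomposes
uniquely as `F[r]` with `r` a redex; consequently reduction is deterministic. -/
theorem unique_decomposition_and_determinism :
    (∀ t : Tm, NormalForm t ∨
      ∃! p : Tm × FCtx, IsRedex p.1 ∧ t = p.2.plug p.1) ∧
    (∀ t t1 t2 : Tm, Red t t1 → Red t t2 → t1 = t2) := by
  refine ⟨fun t => or_iff_not_imp_left.2 fun ht => ?_, fun t t₁ t₂ h₁ h₂ => ?_⟩
  · obtain ⟨t', hred⟩ := exists_red_of_not_normalForm ht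
    obtain ⟨F, r, s, hrs, rfl, -⟩ := hred.exists_contract
    refine ⟨(r, F), ⟨hrs.isRedex, rfl⟩, ?_⟩
    rintro ⟨r', F'⟩ ⟨hr', h⟩
    obtain ⟨rfl, rfl⟩ := hrs.isRedex.plug_inj hr' h
    rfl
  · obtain ⟨F₁, r₁, s₁, hc₁, rfl, rfl⟩ := h₁.exists_contract
    obtain ⟨F₂, r₂, s₂, hc₂, h, rfl⟩ := h₂.exists_contract
    obtain ⟨rfl, rfl⟩ := hc₁.isRedex.plug_inj hc₂.isRedex h
    rw [hc₁.deterministic hc₂]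

end LambdaS
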